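/- Proposition 2.1 (family of generic self-similar Burgers profiles). Let A be a symmetric 3-tensor on ℝ³ (indexed by multi-indices α with |α|=3) such that A_{1jk}=M_{jk} where M is a positive definite symmetric 3×3 matrix. Then there exists a C^∞ function W̄_A : ℝ³ → ℝ solving the self-similar 3D Burgers equation −(1/2)W̄_A + ((3/2)y₁+W̄_A)∂₁W̄_A + (y̌/2)·∇̌W̄_A = 0, which satisfies: W̄_A(0)=0, ∂₁W̄_A(0)=−1, ∇̌W̄_A(0)=0; ∂^γW̄_A(0)=0 for every multi-index γ with |γ| even; and ∂^γW̄_A(0)=A_γ for |γ|=3. -/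

import Mathlib

/-!
Let `P(z) = (1/6) ∑ T_{jkl} z_j z_k z_l` be the cubic form of the tensor, `T_{jkl} = A (e_j+e_k+e_l)`.
Regarding `y₁` as a function of `(W, y₂, y₃)`, the equation becomes linear, and its solutions are
`y₁ = -W` plus a function homogeneous of degree 3. The profile is therefore `W = -U₁`, where
`U(y)` solves `U₁ + P(U) = y₁`, `U₂ = y₂`, `U₃ = y₃`, i.e. `U` is the inverse of the map `Phi`.

* Since `∂₁P(z) = (1/2) ∑ M_{jk} z_j z_k ≥ 0`, `Phi` is strictly increasing and onto along each line
  parallel to the first axis, and its differential is injective everywhere. So `Phi` is bijective and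
  its inverse is smooth by the inverse function theorem (`contDiff_inverse`).
* The equation follows by differentiating `U₁ + P(U) = y₁` and from Euler's identity for `P`
  (`cub_euler`).
* `Phi` is odd, hence so is `W`, and its even-order derivatives vanish at `0` (`pdm_even`).
* `W = -y₁ + P(U)` with `U(0) = 0` and `DU(0) = id`; as `P` is cubic, only the terms in which each
  factor is differentiated once contribute to third derivatives at `0` (`pd3_mul`), and these add up
  to the entries of `T`.
-/

/-!
Proposition 2.1: the family of generic self-similar profiles of the 3D Burgers
equation, indexed by a symmetric 3-tensor `A` (represented here as a function on
multi-indices, which captures exactly the symmetric tensors) whose slice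
`A_{1jk}` is a positive definite symmetric matrix `M`.
-/

/-- Partial derivative in the coordinate direction `i`. -/
noncomputable def pd (i : Fin 3) (f : (Fin 3 → ℝ) → ℝ) : (Fin 3 → ℝ) → ℝ :=
  fun y => fderiv ℝ f y (Pi.single i 1)

/-- Iterated partial derivative `∂₁^a ∂₂^b ∂₃^c f`. -/
noncomputable def pdm (a b c : ℕ) (f : (Fin 3 → ℝ) → ℝ) : (Fin 3 → ℝ) → ℝ :=
  (pd 0)^[a] ((pd 1)^[b] ((pd 2)^[c] f))

/-! ### The cubic form and its derivative -/

/-- The cubic form `∑ T_{jkl} z_j z_k z_l` of a 3-tensor. -/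
def cub (T : Fin 3 → Fin 3 → Fin 3 → ℝ) (z : Fin 3 → ℝ) : ℝ :=
  ∑ j, ∑ k, ∑ l, T j k l * (z j * z k * z l)

/-- The quadratic form `∑ T_{jkl} z_k z_l` of the `j`-th slice of a 3-tensor. -/
def slice (T : Fin 3 → Fin 3 → Fin 3 → ℝ) (j : Fin 3) (z : Fin 3 → ℝ) : ℝ :=
  ∑ k, ∑ l, T j k l * (z k * z l)

/-- Total symmetry of a 3-tensor, expressed by two generating transpositions. -/
def SymmT (T : Fin 3 → Fin 3 → Fin 3 → ℝ) : Prop :=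
  (∀ j k l, T j k l = T k j l) ∧ ∀ j k l, T j k l = T j l k

section Forms

variable {E : Type*} [NormedAddCommGroup E] [NormedSpace ℝ E]
  {T : Fin 3 → Fin 3 → Fin 3 → ℝ}

lemma cub_euler (z : Fin 3 → ℝ) : cub T z = ∑ j, z j * slice T j z := by
  simp only [cub, slice, Finset.mul_sum]
  refine Finset.sum_congr rfl fun j _ => Finset.sum_congr rfl fun k _ =>
    Finset.sum_congr rfl fun l _ => by ring

lemma contDiff_cub {u : E → Fin 3 → ℝ} (hu : ContDiff ℝ (⊤ : ℕ∞) u) :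
    ContDiff ℝ (⊤ : ℕ∞) fun y => cub T (u y) := by
  unfold cub
  fun_prop

lemma cub_neg (z : Fin 3 → ℝ) : cub T (-z) = -cub T z := by
  simp only [cub, ← Finset.sum_neg_distrib, Pi.neg_apply]
  refine Finset.sum_congr rfl fun j _ => Finset.sum_congr rfl fun k _ =>
    Finset.sum_congr rfl fun l _ => by ring

/-- Chain rule for the cubic form; by symmetry the three factors contribute equally. -/
lemma fderiv_cub (hT : SymmT T) {u : E → Fin 3 → ℝ} {y : E}
    (hu : ∀ j, DifferentiableAt ℝ (fun x => u x j) y) (h : E) :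
    fderiv ℝ (fun x => cub T (u x)) y h =
      3 * ∑ j, fderiv ℝ (fun x => u x j) y h * slice T j (u y) := by
  have key : HasFDerivAt (fun x => cub T (u x))
      (∑ j, ∑ k, ∑ l, T j k l • ((u y j * u y k) • fderiv ℝ (fun x => u x l) y +
        u y l • (u y j • fderiv ℝ (fun x => u x k) y +
          u y k • fderiv ℝ (fun x => u x j) y))) y := by
    unfold cub
    refine HasFDerivAt.fun_sum fun j _ => HasFDerivAt.fun_sum fun k _ =>
      HasFDerivAt.fun_sum fun l _ => ?_
    exact ((((hu j).hasFDerivAt).mul (hu k).hasFDerivAt).mul (hu l).hasFDerivAt).const_mul _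
  rw [key.fderiv]
  generalize hL : (fun j => fderiv ℝ (fun x => u x j) y) = L
  have hL' : ∀ j, fderiv ℝ (fun x => u x j) y = L j := fun j => congrFun hL j
  simp only [hL', slice, Fin.sum_univ_three, FunLike.coe_add, FunLike.coe_smul, Pi.add_apply,
    Pi.smul_apply, smul_eq_mul]
  obtain ⟨h1, h2⟩ := hT
  rw [h1 1 0 0, h2 0 1 0, h1 1 0 1, h2 1 1 0, h1 1 0 1, h1 1 0 2, h2 1 2 0, h1 1 0 2, h1 2 0 0,
    h2 0 2 0, h1 2 0 1, h2 0 2 1, h1 2 0 2, h1 2 1 0, h2 1 2 0, h1 1 0 2, h1 2 1 1, h2 1 2 1,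
    h1 2 1 2, h2 2 2 0, h1 2 0 2, h2 2 2 1, h1 2 1 2]
  ring

end Forms

/-! ### The diffeomorphism `Phi` -/

/-- The map `z ↦ (z₁ + P(z), z₂, z₃)` with `P(z) = (1/6) ∑ T_{jkl} z_j z_k z_l`. -/
noncomputable def Phi (T : Fin 3 → Fin 3 → Fin 3 → ℝ) (z : Fin 3 → ℝ) : Fin 3 → ℝ :=
  z + (cub T z / 6) • Pi.single 0 1

section Phi

variable {T : Fin 3 → Fin 3 → Fin 3 → ℝ}

lemma Phi_zero_coord (z : Fin 3 → ℝ) : Phi T z 0 = z 0 + cub T z / 6 := by simp [Phi]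
lemma Phi_one (z : Fin 3 → ℝ) : Phi T z 1 = z 1 := by simp [Phi]
lemma Phi_two (z : Fin 3 → ℝ) : Phi T z 2 = z 2 := by simp [Phi]

lemma contDiff_Phi : ContDiff ℝ (⊤ : ℕ∞) (Phi T) := by
  have := contDiff_cub (T := T) (contDiff_id (𝕜 := ℝ) (E := Fin 3 → ℝ) (n := (⊤ : ℕ∞)))
  simp only [id] at this
  unfold Phi
  fun_prop

/-- Derivative of the first coordinate of `Phi` along a line parallel to the first axis; it is at
least `1` once the slice `T 0` is positive semidefinite. -/
lemma deriv_line (hT : SymmT T) (p : Fin 3 → ℝ) (v : ℝ) :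
    HasDerivAt (fun v => v + cub T ![v, p 1, p 2] / 6) (1 + slice T 0 ![v, p 1, p 2] / 2) v := by
  have hu : ∀ j, DifferentiableAt ℝ (fun x : ℝ => (![x, p 1, p 2] : Fin 3 → ℝ) j) v := by
    intro j
    fin_cases j <;> simp
  have hd : DifferentiableAt ℝ (fun x : ℝ => cub T ![x, p 1, p 2]) v := by
    refine ((contDiff_cub ?_).differentiable (by simp)).differentiableAt
    rw [contDiff_pi]
    intro j
    fin_cases j <;> simp <;> fun_prop
  have h := fderiv_cub hT hu 1
  rw [Fin.sum_univ_three] at h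
  simp at h
  have h2 := hd.hasDerivAt
  rw [h] at h2
  exact ((hasDerivAt_id' v).fun_add (h2.div_const 6)).congr_deriv (by ring)

lemma strictMono_line (hT : SymmT T) (hpos : ∀ z, 0 ≤ slice T 0 z) (p : Fin 3 → ℝ) :
    StrictMono (fun v => v + cub T ![v, p 1, p 2] / 6) := by
  apply strictMono_of_deriv_pos
  intro v
  rw [(deriv_line hT p v).deriv]
  have := hpos ![v, p 1, p 2]
  linarith

lemma surjective_line (hT : SymmT T) (hpos : ∀ z, 0 ≤ slice T 0 z) (p : Fin 3 → ℝ) :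
    Function.Surjective (fun v => v + cub T ![v, p 1, p 2] / 6) := by
  have hm : Monotone (fun v => cub T ![v, p 1, p 2] / 6) := by
    have hd : ∀ v, HasDerivAt (fun v => cub T ![v, p 1, p 2] / 6)
        (slice T 0 ![v, p 1, p 2] / 2) v := by
      intro v
      have h := (deriv_line hT p v).fun_sub (hasDerivAt_id' v)
      simpa only [add_sub_cancel_left] using h
    refine monotone_of_deriv_nonneg (fun v => (hd v).differentiableAt) fun v => ?_
    rw [(hd v).deriv]
    have := hpos ![v, p 1, p 2]
    linarith
  refine Continuous.surjective
    (continuous_iff_continuousAt.2 fun v => (deriv_line hT p v).continuousAt) ?_ ?_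
  · refine Filter.tendsto_atTop_mono' _ ?_ (Filter.tendsto_atTop_add_const_right _
      (cub T ![0, p 1, p 2] / 6) Filter.tendsto_id)
    filter_upwards [Filter.eventually_ge_atTop 0] with v hv
    have := hm hv
    simp only [id] at *
    linarith
  · refine Filter.tendsto_atBot_mono' _ ?_ (Filter.tendsto_atBot_add_const_right _
      (cub T ![0, p 1, p 2] / 6) Filter.tendsto_id)
    filter_upwards [Filter.eventually_le_atBot 0] with v hv
    have := hm hv
    simp only [id] at *
    linarith

lemma vec_eq (z : Fin 3 → ℝ) : ![z 0, z 1, z 2] = z := by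
  ext j; fin_cases j <;> rfl

lemma Phi_injective (hT : SymmT T) (hpos : ∀ z, 0 ≤ slice T 0 z) :
    Function.Injective (Phi T) := by
  intro z w h
  have h0 := congrFun h 0
  have h1 := congrFun h 1
  have h2 := congrFun h 2
  rw [Phi_zero_coord, Phi_zero_coord] at h0
  rw [Phi_one, Phi_one] at h1
  rw [Phi_two, Phi_two] at h2
  have : z 0 = w 0 := by
    apply (strictMono_line hT hpos z).injective
    simp only
    rw [vec_eq, h1, h2, vec_eq, h0]
  rw [← vec_eq z, ← vec_eq w, this, h1, h2]

lemma Phi_surjective (hT : SymmT T) (hpos : ∀ z, 0 ≤ slice T 0 z) :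
    Function.Surjective (Phi T) := by
  intro y
  obtain ⟨v, hv⟩ := surjective_line hT hpos y (y 0)
  refine ⟨![v, y 1, y 2], ?_⟩
  ext j
  fin_cases j
  · simpa [Phi_zero_coord] using hv
  · simp [Phi_one]
  · simp [Phi_two]

lemma fderiv_Phi_injective (hT : SymmT T) (hpos : ∀ z, 0 ≤ slice T 0 z) (z : Fin 3 → ℝ) :
    Function.Injective (fderiv ℝ (Phi T) z) := by
  rw [injective_iff_map_eq_zero]
  intro h hh
  have hd : DifferentiableAt ℝ (Phi T) z := (contDiff_Phi.differentiable (by simp)) z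
  have hc : DifferentiableAt ℝ (fun x => cub T x) z :=
    ((contDiff_cub contDiff_id).differentiable (by simp)) z
  have comp : ∀ j, fderiv ℝ (fun x => Phi T x j) z h = 0 := by
    intro j
    have := fderiv_pi (𝕜 := ℝ) (φ := fun j x => Phi T x j) (x := z)
      (fun j => differentiableAt_pi.1 hd j)
    have h3 : fderiv ℝ (Phi T) z h j = fderiv ℝ (fun x => Phi T x j) z h :=
      congrArg (fun L : (Fin 3 → ℝ) →L[ℝ] (Fin 3 → ℝ) => L h j) this
    rw [← h3]
    exact congrFun hh j
  have hp : ∀ j, fderiv ℝ (fun x : Fin 3 → ℝ => x j) z h = h j := by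
    intro j
    rw [(hasFDerivAt_apply j z).fderiv]; rfl
  have c0 := comp 0
  have c1 := comp 1
  have c2 := comp 2
  simp only [Phi_one, Phi_two, hp] at c1 c2
  have hcub := fderiv_cub hT (u := fun x : Fin 3 → ℝ => x) (y := z)
    (fun j => by fun_prop) h
  simp only [hp, Fin.sum_univ_three, c1, c2] at hcub
  simp only [Phi_zero_coord] at c0
  have : HasFDerivAt (fun x : Fin 3 → ℝ => x 0 + cub T x / 6)
      (ContinuousLinearMap.proj 0 + (6 : ℝ)⁻¹ • fderiv ℝ (fun x => cub T x) z) z := by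
    simp only [div_eq_inv_mul]
    exact (hasFDerivAt_apply 0 z).add (hc.hasFDerivAt.const_mul _)
  rw [this.fderiv] at c0
  simp [hcub] at c0
  have hz := hpos z
  have : h 0 = 0 := by
    have : h 0 * (1 + slice T 0 z / 2) = 0 := by linarith
    rcases mul_eq_zero.1 this with h | h
    · exact h
    · linarith
  ext j
  fin_cases j
  · exact this
  · exact c1
  · exact c2

/-- A right inverse of the injective map `Phi` is smooth: near each point it must coincide with the
local inverse given by the inverse function theorem. -/
lemma contDiff_inverse (hT : SymmT T) (hpos : ∀ z, 0 ≤ slice T 0 z)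
    (U : (Fin 3 → ℝ) → Fin 3 → ℝ) (hU : ∀ y, Phi T (U y) = y) :
    ContDiff ℝ (⊤ : ℕ∞) U := by
  rw [contDiff_iff_contDiffAt]
  intro y
  have hn : ((⊤ : ℕ∞) : WithTop ℕ∞) ≠ 0 := by simp
  have hc : ContDiffAt ℝ (⊤ : ℕ∞) (Phi T) (U y) := contDiff_Phi.contDiffAt
  let e : (Fin 3 → ℝ) ≃L[ℝ] (Fin 3 → ℝ) :=
    (LinearEquiv.ofInjectiveEndo (fderiv ℝ (Phi T) (U y) : (Fin 3 → ℝ) →ₗ[ℝ] (Fin 3 → ℝ))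
      (fderiv_Phi_injective hT hpos (U y))).toContinuousLinearEquiv
  have he : (e : (Fin 3 → ℝ) →L[ℝ] (Fin 3 → ℝ)) = fderiv ℝ (Phi T) (U y) := by
    ext1 h; rfl
  have hd : HasFDerivAt (Phi T) (e : (Fin 3 → ℝ) →L[ℝ] (Fin 3 → ℝ)) (U y) := by
    rw [he]
    exact (hc.differentiableAt hn).hasFDerivAt
  have hl := hc.to_localInverse hd hn
  rw [hU] at hl
  refine hl.congr_of_eventuallyEq ?_
  have hr := (hc.hasStrictFDerivAt' hd hn).eventually_right_inverse
  rw [hU] at hr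
  filter_upwards [hr] with x hx
  apply Phi_injective hT hpos
  rw [hU]
  exact hx.symm

end Phi

/-! ### Calculus of iterated partial derivatives -/

section PartialDerivatives

lemma contDiff_pd {f : (Fin 3 → ℝ) → ℝ} (hf : ContDiff ℝ (⊤ : ℕ∞) f) (i : Fin 3) :
    ContDiff ℝ (⊤ : ℕ∞) (pd i f) := by
  unfold pd
  exact (hf.fderiv_right (m := (⊤ : ℕ∞)) (by simp)).clm_apply contDiff_const

lemma diff_of {f : (Fin 3 → ℝ) → ℝ} (hf : ContDiff ℝ (⊤ : ℕ∞) f) : Differentiable ℝ f :=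
  hf.differentiable (by simp)

lemma pd_add {f g : (Fin 3 → ℝ) → ℝ} (hf : ContDiff ℝ (⊤ : ℕ∞) f)
    (hg : ContDiff ℝ (⊤ : ℕ∞) g) (i : Fin 3) :
    pd i (fun y => f y + g y) = fun y => pd i f y + pd i g y := by
  ext y
  simp [pd, fderiv_fun_add (diff_of hf y) (diff_of hg y)]

lemma pd_mul {f g : (Fin 3 → ℝ) → ℝ} (hf : ContDiff ℝ (⊤ : ℕ∞) f)
    (hg : ContDiff ℝ (⊤ : ℕ∞) g) (i : Fin 3) :
    pd i (fun y => f y * g y) = fun y => f y * pd i g y + pd i f y * g y := by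
  ext y
  simp [pd, fderiv_fun_mul (diff_of hf y) (diff_of hg y), mul_comm]

lemma pd_const_mul {f : (Fin 3 → ℝ) → ℝ} (hf : ContDiff ℝ (⊤ : ℕ∞) f) (c : ℝ) (i : Fin 3) :
    pd i (fun y => c * f y) = fun y => c * pd i f y := by
  ext y
  simp [pd, fderiv_const_mul (diff_of hf y)]

lemma pd_sum {F : Fin 3 → (Fin 3 → ℝ) → ℝ} (hF : ∀ j, ContDiff ℝ (⊤ : ℕ∞) (F j))
    (i : Fin 3) :
    pd i (fun y => ∑ j, F j y) = fun y => ∑ j, pd i (F j) y := by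
  ext y
  simp [pd, fderiv_fun_sum (fun j _ => diff_of (hF j) y)]

lemma pd_coord (i j : Fin 3) :
    pd i (fun y => y j) = fun _ => if j = i then 1 else 0 := by
  ext y
  rw [pd, (hasFDerivAt_apply j y).fderiv]
  simp [Pi.single_apply]

lemma pd_const (i : Fin 3) (c : ℝ) : pd i (fun _ => c) = fun _ => 0 := by
  ext y
  simp [pd]

/-- Differentiation flips parity. No differentiability is needed, the junk value `0` of `fderiv`
being compatible with the reflection. -/
lemma pd_parity {f : (Fin 3 → ℝ) → ℝ} {s : ℝ} (hf : ∀ y, f (-y) = s * f y) (i : Fin 3)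
    (y : Fin 3 → ℝ) : pd i f (-y) = -s * pd i f y := by
  have h : (fun y => f (-y)) = s • f := by
    ext y; simp [hf]
  have h2 := congrArg (fun g => fderiv ℝ g y (Pi.single i 1)) h
  have h3 := fderiv_comp_smul (𝕜 := ℝ) (f := f) (x := y) (-1)
  simp only [neg_one_smul] at h3
  simp only [h3, fderiv_const_smul_field] at h2
  simp at h2
  simp only [pd]
  linarith

lemma pd_iter_parity {f : (Fin 3 → ℝ) → ℝ} {s : ℝ} (hf : ∀ y, f (-y) = s * f y) (i : Fin 3)
    (n : ℕ) (y : Fin 3 → ℝ) : (pd i)^[n] f (-y) = ((-1) ^ n * s) * (pd i)^[n] f y := by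
  induction n generalizing y with
  | zero => simp [hf]
  | succ n ih =>
    rw [Function.iterate_succ_apply', pd_parity ih]
    ring

lemma pdm_even {f : (Fin 3 → ℝ) → ℝ} (hf : ∀ y, f (-y) = -1 * f y) {a b c : ℕ}
    (h : Even (a + b + c)) : pdm a b c f 0 = 0 := by
  have := pd_iter_parity (pd_iter_parity (pd_iter_parity hf 2 c) 1 b) 0 a 0
  have hs : (-1 : ℝ) ^ a * ((-1) ^ b * ((-1) ^ c * -1)) = -1 := by
    have := h.neg_one_pow (α := ℝ)
    rw [pow_add, pow_add] at this
    linear_combination -this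
  rw [hs, neg_zero] at this
  unfold pdm
  linarith

/-- At a common zero of three functions, only the terms in which each factor is differentiated
exactly once survive in a third derivative of their product. -/
lemma pd3_mul {f g h : (Fin 3 → ℝ) → ℝ} (hf : ContDiff ℝ (⊤ : ℕ∞) f)
    (hg : ContDiff ℝ (⊤ : ℕ∞) g) (hh : ContDiff ℝ (⊤ : ℕ∞) h) (f0 : f 0 = 0) (g0 : g 0 = 0)
    (h0 : h 0 = 0) (a b c : Fin 3) :
    pd a (pd b (pd c (fun y => f y * g y * h y))) 0 =
      pd a f 0 * pd b g 0 * pd c h 0 + pd a f 0 * pd c g 0 * pd b h 0 +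
      pd b f 0 * pd a g 0 * pd c h 0 + pd b f 0 * pd c g 0 * pd a h 0 +
      pd c f 0 * pd a g 0 * pd b h 0 + pd c f 0 * pd b g 0 * pd a h 0 := by
  have d1 : ∀ {f : (Fin 3 → ℝ) → ℝ}, ContDiff ℝ (⊤ : ℕ∞) f → ∀ i, ContDiff ℝ (⊤ : ℕ∞) (pd i f) :=
    fun h i => contDiff_pd h i
  have hfc := d1 hf c
  have hgc := d1 hg c
  have hhc := d1 hh c
  have hfb := d1 hf b
  have hgb := d1 hg b
  have hhb := d1 hh b
  have hfbc := d1 hfc b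
  have hgbc := d1 hgc b
  have hhbc := d1 hhc b
  simp (disch := fun_prop) only [pd_mul, pd_add]
  simp only [f0, g0, h0]
  ring

end PartialDerivatives

/-! ### Construction of the profile -/

theorem generic_burgers_profile_family
    (A : (Fin 3 → ℕ) → ℝ) (M : Matrix (Fin 3) (Fin 3) ℝ)
    (hMsymm : M.IsSymm) (hMpos : M.PosDef)
    (hA : ∀ j k : Fin 3,
      A (Pi.single 0 1 + Pi.single j 1 + Pi.single k 1) = M j k) :
    ∃ Wb : (Fin 3 → ℝ) → ℝ,
      ContDiff ℝ (⊤ : ℕ∞) Wb ∧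
      (∀ y : Fin 3 → ℝ,
        -(1/2) * Wb y + ((3/2) * y 0 + Wb y) * pd 0 Wb y
          + (y 1 / 2) * pd 1 Wb y + (y 2 / 2) * pd 2 Wb y = 0) ∧
      Wb 0 = 0 ∧ pd 0 Wb 0 = -1 ∧ pd 1 Wb 0 = 0 ∧ pd 2 Wb 0 = 0 ∧
      (∀ γ : Fin 3 → ℕ, Even (γ 0 + γ 1 + γ 2) →
        pdm (γ 0) (γ 1) (γ 2) Wb 0 = 0) ∧
      (∀ γ : Fin 3 → ℕ, γ 0 + γ 1 + γ 2 = 3 →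
        pdm (γ 0) (γ 1) (γ 2) Wb 0 = A γ) := by
  -- `T` is symmetric because `A` only sees the sum of the three indices; `hA` says `T 0 j k = M j k`.
  set T : Fin 3 → Fin 3 → Fin 3 → ℝ := fun j k l =>
    A (Pi.single j 1 + Pi.single k 1 + Pi.single l 1) with hTdef
  have hT : SymmT T := by
    refine ⟨fun j k l => ?_, fun j k l => ?_⟩
    · exact congrArg (fun x => A (x + (Pi.single l 1 : Fin 3 → ℕ))) (add_comm _ _)
    · exact congrArg A (add_right_comm _ _ _)
  have hpos : ∀ z, 0 ≤ slice T 0 z := by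
    intro z
    have h := hMpos.posSemidef.dotProduct_mulVec_nonneg z
    refine h.trans_eq ?_
    simp only [slice, hTdef, hA, dotProduct, Matrix.mulVec, Finset.mul_sum]
    refine Finset.sum_congr rfl fun j _ => Finset.sum_congr rfl fun k _ => ?_
    simp only [Pi.star_apply, star_trivial]
    ring
  choose U hU using Phi_surjective hT hpos
  have hUs : ContDiff ℝ (⊤ : ℕ∞) U := contDiff_inverse hT hpos U hU
  have hUj : ∀ j, ContDiff ℝ (⊤ : ℕ∞) (fun y => U y j) := contDiff_pi.1 hUs
  have hU0 : ∀ y, U y 0 + cub T (U y) / 6 = y 0 := fun y => by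
    rw [← Phi_zero_coord, hU]
  have hU1 : ∀ y, U y 1 = y 1 := fun y => by
    have h := Phi_one (T := T) (U y)
    rw [hU] at h
    exact h.symm
  have hU2 : ∀ y, U y 2 = y 2 := fun y => by
    have h := Phi_two (T := T) (U y)
    rw [hU] at h
    exact h.symm
  have hodd : ∀ y, U (-y) = -U y := by
    intro y
    apply Phi_injective hT hpos
    rw [hU]
    nth_rewrite 1 [← hU y]
    simp only [Phi, cub_neg]
    module
  have hUz : U 0 = 0 := by
    have := hodd 0
    rw [neg_zero] at this
    exact self_eq_neg.1 this
  -- The identity `U₁ + P(U) = y₁` differentiated in the direction `i`.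
  have hdiff : ∀ i y, pd i (fun y => U y 0) y +
      (∑ j, pd i (fun y => U y j) y * slice T j (U y)) / 2 = if 0 = i then 1 else 0 := by
    intro i y
    have h1 : (fun y => U y 0 + 6⁻¹ * cub T (U y)) = fun y => y 0 := by
      ext y; rw [← hU0 y]; ring
    have h2 := congrFun (congrArg (pd i) h1) y
    rw [pd_coord, pd_add (hUj 0) (contDiff_const.mul (contDiff_cub hUs)),
      pd_const_mul (contDiff_cub hUs)] at h2
    have h3 : pd i (fun y => cub T (U y)) y = _ :=
      fderiv_cub hT (fun j => diff_of (hUj j) y) _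
    simp only [h3] at h2
    simp only [pd] at h2 ⊢
    linarith
  have hp1 : ∀ i y, pd i (fun y => U y 1) y = if 1 = i then 1 else 0 := by
    intro i y
    simp only [hU1, pd_coord]
  have hp2 : ∀ i y, pd i (fun y => U y 2) y = if 2 = i then 1 else 0 := by
    intro i y
    simp only [hU2, pd_coord]
  have hDid : ∀ i j, pd i (fun y => U y j) 0 = if j = i then 1 else 0 := by
    intro i j
    fin_cases j
    · have := hdiff i 0
      simpa [hUz, slice] using this
    · exact hp1 i 0
    · exact hp2 i 0
  have hneg : ∀ i y, pd i (fun y => -U y 0) y = -pd i (fun y => U y 0) y := by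
    intro i y
    simp [pd, fderiv_fun_neg]
  refine ⟨fun y => -U y 0, (hUj 0).neg, ?_, ?_, ?_, ?_, ?_, ?_, ?_⟩
  · intro y
    have e := cub_euler (T := T) (U y)
    have d0 := hdiff 0 y
    have d1 := hdiff 1 y
    have d2 := hdiff 2 y
    have q := hpos (U y)
    have h0 := hU0 y
    simp only [Fin.sum_univ_three, hp1, hp2] at d0 d1 d2
    simp only [Fin.sum_univ_three, hU1, hU2] at e
    simp at d0 d1 d2
    simp only [hneg]
    -- `q = 1 + ∂₁P(U)` is positive; after multiplication by it, `q ∂₁U₁ = 1` and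
    -- `q ∂ᵢU₁ = -∂ᵢP(U)` (`i = 2, 3`) eliminate all derivatives of `U₁`.
    have hq : (1 + slice T 0 (U y) / 2) ≠ 0 := by positivity
    apply mul_left_cancel₀ hq
    linear_combination (-(3 / 2) * y 0 + U y 0) * d0 - y 1 / 2 * d1 - y 2 / 2 * d2
      + (3 / 2) * h0 - e / 4
  · simp [hUz]
  · simp [hneg, hDid]
  · simp [hneg, hDid]
  · simp [hneg, hDid]
  · intro γ hγ
    exact pdm_even (fun y => by simp [hodd]) hγ
  · have third : ∀ a b c, pd a (pd b (pd c (fun y => -U y 0))) 0 = T a b c := by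
      intro a b c
      have hm : ∀ j k l, ContDiff ℝ (⊤ : ℕ∞) (fun y => U y j * U y k * U y l) :=
        fun j k l => ((hUj j).mul (hUj k)).mul (hUj l)
      have hm1 := fun j k l => contDiff_pd (hm j k l) c
      have hm2 := fun j k l => contDiff_pd (hm1 j k l) b
      have hW : (fun y => -U y 0) = fun y => -1 * y 0 +
          ∑ j, ∑ k, ∑ l, (T j k l / 6) * (U y j * U y k * U y l) := by
        ext y
        have := hU0 y
        rw [cub] at this
        simp only [div_mul_eq_mul_div, ← Finset.sum_div]
        linarith
      have expand : ∀ (i : Fin 3) (G : Fin 3 → Fin 3 → Fin 3 → (Fin 3 → ℝ) → ℝ),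
          (∀ j k l, ContDiff ℝ (⊤ : ℕ∞) (G j k l)) →
          pd i (fun y => ∑ j, ∑ k, ∑ l, (T j k l / 6) * G j k l y) =
            fun y => ∑ j, ∑ k, ∑ l, (T j k l / 6) * pd i (G j k l) y := by
        intro i G hG
        rw [pd_sum (fun j => by fun_prop)]
        ext y
        refine Finset.sum_congr rfl fun j _ => ?_
        rw [pd_sum (fun k => by fun_prop)]
        refine Finset.sum_congr rfl fun k _ => ?_
        rw [pd_sum (fun l => by fun_prop)]
        refine Finset.sum_congr rfl fun l _ => ?_
        rw [pd_const_mul (hG j k l)]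
      rw [hW, pd_add (by fun_prop) (by fun_prop), pd_const_mul (by fun_prop), pd_coord,
        expand c _ hm, pd_add contDiff_const (by fun_prop), pd_const, expand b _ hm1,
        pd_add contDiff_const (by fun_prop), pd_const, expand a _ hm2]
      have z : ∀ j, U 0 j = 0 := fun j => congrFun hUz j
      simp only [fun j k l => pd3_mul (hUj j) (hUj k) (hUj l) (z j) (z k) (z l) a b c, hDid,
        mul_add, Finset.sum_add_distrib]
      simp
      obtain ⟨h1, h2⟩ := hT
      rw [h2 a c b, h1 b a c, h2 b c a, h1 b a c, h1 c a b, h2 a c b, h1 c b a, h2 b c a, h1 b a c]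
      ring
    intro γ hγ
    have fin : ∀ a b c, γ = Pi.single a 1 + Pi.single b 1 + Pi.single c 1 →
        pd a (pd b (pd c (fun y => -U y 0))) 0 = A γ := by
      rintro a b c rfl
      exact third a b c
    have vec : γ = ![γ 0, γ 1, γ 2] := by
      ext j; fin_cases j <;> rfl
    have l0 : γ 0 ≤ 3 := by omega
    have l1 : γ 1 ≤ 3 := by omega
    have h2 : γ 2 = 3 - γ 0 - γ 1 := by omega
    rw [h2] at vec hγ ⊢
    generalize γ 0 = p at *
    generalize γ 1 = q at *
    interval_cases p <;> interval_cases q <;> try omega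
    · exact fin 2 2 2 (vec.trans (by decide))
    · exact fin 1 2 2 (vec.trans (by decide))
    · exact fin 1 1 2 (vec.trans (by decide))
    · exact fin 1 1 1 (vec.trans (by decide))
    · exact fin 0 2 2 (vec.trans (by decide))
    · exact fin 0 1 2 (vec.trans (by decide))
    · exact fin 0 1 1 (vec.trans (by decide))
    · exact fin 0 0 2 (vec.trans (by decide))
    · exact fin 0 0 1 (vec.trans (by decide))
    · exact fin 0 0 0 (vec.trans (by decide))
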